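/- A word w lies in C(212) if and only if every column C of P(w) satisfies: (a) every column of length 1 has entry equal to 2, and (b) every column of length at least 2 contains both a 1 and a 2. -/

import Mathlib

namespace Plactic

/-- Insert `x` into a weakly increasing row, returning the new row and the bumped entry. -/
def rowInsert (x : ℕ) : List ℕ → List ℕ × Option ℕ
  | [] => ([x], none)
  | y :: ys =>
    if x < y then (x :: ys, some y)
    else
      let p := rowInsert x ys
      (y :: p.1, p.2)

/-- RSK insertion of `x` into a tableau given as a list of rows. -/
def tInsert (x : ℕ) : List (List ℕ) → List (List ℕ)
  | [] => [[x]]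
  | r :: rs =>
    match rowInsert x r with
    | (r', none) => r' :: rs
    | (r', some y) => r' :: tInsert y rs

/-- The RSK insertion tableau of a word. -/
def P (w : List ℕ) : List (List ℕ) := w.foldl (fun t x => tInsert x t) []

/-- The `i`-th row (0-indexed) of the insertion tableau of `w`. -/
def row (w : List ℕ) (i : ℕ) : List ℕ := (P w).getD i []

/-- The `j`-th column (0-indexed) of a tableau, read top to bottom. -/
def col (T : List (List ℕ)) (j : ℕ) : List ℕ := T.filterMap (fun r => r[j]?)

/-- An elementary Knuth transposition. -/
inductive KStep : List ℕ → List ℕ → Prop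
  | k1 (x y : List ℕ) (a b c : ℕ) : a ≤ b → b < c →
      KStep (x ++ [a, c, b] ++ y) (x ++ [c, a, b] ++ y)
  | k2 (x y : List ℕ) (a b c : ℕ) : a < b → b ≤ c →
      KStep (x ++ [b, a, c] ++ y) (x ++ [b, c, a] ++ y)

/-- Knuth equivalence: the equivalence relation generated by Knuth transpositions. -/
def KEquiv : List ℕ → List ℕ → Prop := Relation.EqvGen KStep

/-- The centralizer of `u` in the plactic monoid. -/
def Cent (u : List ℕ) : Set (List ℕ) := {w | KEquiv (u ++ w) (w ++ u)}

/-! ### Knuth equivalence as a congruence -/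

theorem KEquiv.refl (u : List ℕ) : KEquiv u u := Relation.EqvGen.refl u

theorem KEquiv.symm {u v : List ℕ} (h : KEquiv u v) : KEquiv v u :=
  Relation.EqvGen.symm _ _ h

theorem KEquiv.trans {u v w : List ℕ} (h : KEquiv u v) (h' : KEquiv v w) : KEquiv u w :=
  Relation.EqvGen.trans _ _ _ h h'

theorem KEquiv.congr_append {u v : List ℕ} (h : KEquiv u v) (x y : List ℕ) :
    KEquiv (x ++ u ++ y) (x ++ v ++ y) := by
  induction h with
  | rel u v h =>
    apply Relation.EqvGen.rel
    cases h with
    | k1 p q a b c hab hbc => simpa using KStep.k1 (x ++ p) (q ++ y) a b c hab hbc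
    | k2 p q a b c hab hbc => simpa using KStep.k2 (x ++ p) (q ++ y) a b c hab hbc
  | refl u => exact KEquiv.refl _
  | symm u v _ ih => exact ih.symm
  | trans u v w _ _ ih ih' => exact ih.trans ih'

theorem KEquiv.append_left {u v : List ℕ} (h : KEquiv u v) (x : List ℕ) :
    KEquiv (x ++ u) (x ++ v) := by
  simpa using h.congr_append x []

theorem KEquiv.append_right {u v : List ℕ} (h : KEquiv u v) (y : List ℕ) :
    KEquiv (u ++ y) (v ++ y) := by
  simpa using h.congr_append [] y

theorem KEquiv.cons {u v : List ℕ} (h : KEquiv u v) (x : ℕ) : KEquiv (x :: u) (x :: v) :=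
  h.append_left [x]

theorem kEquiv_k1 {a b c : ℕ} (hab : a ≤ b) (hbc : b < c) (y : List ℕ) :
    KEquiv (a :: c :: b :: y) (c :: a :: b :: y) := by
  exact Relation.EqvGen.rel _ _ (KStep.k1 [] y a b c hab hbc)

theorem kEquiv_k2 {a b c : ℕ} (hab : a < b) (hbc : b ≤ c) (y : List ℕ) :
    KEquiv (b :: a :: c :: y) (b :: c :: a :: y) := by
  exact Relation.EqvGen.rel _ _ (KStep.k2 [] y a b c hab hbc)

theorem KEquiv.perm {u v : List ℕ} (h : KEquiv u v) : u.Perm v := by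
  induction h with
  | rel u v h =>
    cases h with
    | k1 p q a b c _ _ =>
      exact ((List.Perm.swap c a [b]).append_left p).append_right q
    | k2 p q a b c _ _ =>
      exact (((List.Perm.swap c a []).cons b).append_left p).append_right q
  | refl u => exact List.Perm.refl _
  | symm u v _ ih => exact ih.symm
  | trans u v w _ _ ih ih' => exact ih.trans ih'

/-- A small letter moves left through a weakly increasing row up to its first entry. -/
theorem kEquiv_row_smaller {c d : ℕ} {s : List ℕ} (hs : (c :: s).Pairwise (· ≤ ·)) (hd : d < c) :
    KEquiv (c :: (s ++ [d])) (c :: d :: s) := by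
  induction s generalizing c with
  | nil => exact KEquiv.refl _
  | cons e s ih =>
    have hce : c ≤ e := List.rel_of_pairwise_cons hs (by simp)
    exact ((ih hs.of_cons (by omega)).cons c).trans (kEquiv_k2 hd hce s).symm

/-- A letter moves right through a strictly decreasing word of larger letters. -/
theorem kEquiv_column_larger {x b : ℕ} {D : List ℕ} (hD : (D ++ [b]).Pairwise (· > ·))
    (hx : x ≤ b) : KEquiv (x :: (D ++ [b])) (D ++ [x, b]) := by
  induction D with
  | nil => exact KEquiv.refl _
  | cons d D ih =>
    obtain ⟨hd, hD'⟩ := List.pairwise_cons.1 hD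
    refine KEquiv.trans ?_ ((ih hD').cons d)
    cases D with
    | nil => exact kEquiv_k1 hx (hd b (by simp)) []
    | cons e D =>
      have hbe : b < e := List.rel_of_pairwise_cons hD' (by simp)
      exact kEquiv_k1 (by omega) (hd e (by simp)) _

/-! ### Row insertion -/

theorem rowInsert_cons_of_lt {x y : ℕ} (h : x < y) (ys : List ℕ) :
    rowInsert x (y :: ys) = (x :: ys, some y) := by
  simp [rowInsert, h]

theorem rowInsert_cons_of_le {x y : ℕ} (h : y ≤ x) (ys : List ℕ) :
    rowInsert x (y :: ys) = (y :: (rowInsert x ys).1, (rowInsert x ys).2) := by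
  simp [rowInsert, h]

theorem rowInsert_perm (x : ℕ) (r : List ℕ) :
    ((rowInsert x r).2.toList ++ (rowInsert x r).1).Perm (x :: r) := by
  induction r with
  | nil => simp [rowInsert]
  | cons y ys ih =>
    by_cases h : x < y
    · simpa [rowInsert_cons_of_lt h] using List.Perm.swap x y ys
    · rw [rowInsert_cons_of_le (by omega)]
      exact List.perm_middle.trans ((ih.cons y).trans (List.Perm.swap x y ys))

theorem lt_of_rowInsert_eq_some {x z : ℕ} {r : List ℕ} (h : (rowInsert x r).2 = some z) :
    x < z := by
  induction r with
  | nil => simp [rowInsert] at h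
  | cons y ys ih =>
    by_cases hxy : x < y
    · simp only [rowInsert_cons_of_lt hxy, Option.some.injEq] at h
      omega
    · rw [rowInsert_cons_of_le (by omega)] at h
      exact ih h

theorem le_of_rowInsert_eq_none {x y : ℕ} {r : List ℕ} (h : (rowInsert x r).2 = none)
    (hy : y ∈ r) : y ≤ x := by
  induction r with
  | nil => simp at hy
  | cons z zs ih =>
    by_cases hxz : x < z
    · simp [rowInsert_cons_of_lt hxz] at h
    · rw [rowInsert_cons_of_le (by omega)] at h
      rcases List.mem_cons.1 hy with rfl | hy
      · omega
      · exact ih h hy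

theorem mem_rowInsert_self (x : ℕ) (r : List ℕ) : x ∈ (rowInsert x r).1 := by
  induction r with
  | nil => simp [rowInsert]
  | cons y ys ih =>
    by_cases h : x < y
    · simp [rowInsert_cons_of_lt h]
    · simp [rowInsert_cons_of_le (not_lt.1 h), ih]

theorem mem_of_mem_rowInsert {x z : ℕ} {r : List ℕ} (h : z ∈ (rowInsert x r).1) :
    z = x ∨ z ∈ r :=
  List.mem_cons.1 ((rowInsert_perm x r).mem_iff.1 (List.mem_append_right _ h))

theorem mem_of_rowInsert_eq_some {x z : ℕ} {r : List ℕ} (h : (rowInsert x r).2 = some z) :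
    z ∈ r := by
  have hz : z ∈ x :: r := (rowInsert_perm x r).mem_iff.1 (by simp [h])
  have := lt_of_rowInsert_eq_some h
  rcases List.mem_cons.1 hz with rfl | hz
  · omega
  · exact hz

theorem mem_rowInsert_or {x y : ℕ} {r : List ℕ} (h : y ∈ r) :
    y ∈ (rowInsert x r).1 ∨ (rowInsert x r).2 = some y := by
  have := (rowInsert_perm x r).mem_iff.2 (List.mem_cons_of_mem x h)
  rcases List.mem_append.1 this with h | h
  · exact Or.inr (by simpa using h)
  · exact Or.inl h

theorem mem_rowInsert_of_le {x y : ℕ} {r : List ℕ} (h : y ∈ r) (hyx : y ≤ x) :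
    y ∈ (rowInsert x r).1 := by
  rcases mem_rowInsert_or (x := x) h with h | h
  · exact h
  · have := lt_of_rowInsert_eq_some h
    omega

theorem rowInsert_sorted {r : List ℕ} (hr : r.Pairwise (· ≤ ·)) (x : ℕ) :
    (rowInsert x r).1.Pairwise (· ≤ ·) := by
  induction r with
  | nil => simp [rowInsert]
  | cons y ys ih =>
    obtain ⟨hy, hys⟩ := List.pairwise_cons.1 hr
    by_cases h : x < y
    · rw [rowInsert_cons_of_lt h]
      exact List.pairwise_cons.2 ⟨fun z hz => h.le.trans (hy z hz), hys⟩
    · rw [rowInsert_cons_of_le (by omega)]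
      refine List.pairwise_cons.2 ⟨fun z hz => ?_, ih hys⟩
      rcases mem_of_mem_rowInsert hz with rfl | hz
      · omega
      · exact hy z hz

theorem le_of_rowInsert_eq_some {x y z : ℕ} {r : List ℕ} (hr : r.Pairwise (· ≤ ·))
    (h : (rowInsert x r).2 = some y) (hz : z ∈ (rowInsert x r).1) (hxz : x < z) : y ≤ z := by
  induction r with
  | nil => simp [rowInsert] at h
  | cons a r ih =>
    obtain ⟨ha, hr'⟩ := List.pairwise_cons.1 hr
    by_cases hxa : x < a
    · simp only [rowInsert_cons_of_lt hxa, Option.some.injEq] at h hz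
      subst h
      rcases List.mem_cons.1 hz with rfl | hz
      · omega
      · exact ha z hz
    · rw [rowInsert_cons_of_le (by omega)] at h hz
      rcases List.mem_cons.1 hz with rfl | hz
      · omega
      · exact ih hr' h hz

theorem kEquiv_rowInsert {r : List ℕ} (hr : r.Pairwise (· ≤ ·)) (x : ℕ) :
    KEquiv (r ++ [x]) ((rowInsert x r).2.toList ++ (rowInsert x r).1) := by
  induction r with
  | nil => simpa [rowInsert] using KEquiv.refl _
  | cons y ys ih =>
    obtain ⟨hy, hys⟩ := List.pairwise_cons.1 hr
    by_cases h : x < y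
    · simpa [rowInsert_cons_of_lt h] using kEquiv_row_smaller hr h
    · rw [rowInsert_cons_of_le (by omega)]
      refine ((ih hys).cons y).trans ?_
      rcases hb : (rowInsert x ys).2 with _ | z
      · exact KEquiv.refl _
      · have hxz := lt_of_rowInsert_eq_some hb
        have hself := mem_rowInsert_self x ys
        have hsort := rowInsert_sorted hys x
        rcases hrow : (rowInsert x ys).1 with _ | ⟨e, es⟩
        · simp [hrow] at hself
        · have hye : y ≤ e := by
            rcases mem_of_mem_rowInsert (x := x) (r := ys) (z := e) (by simp [hrow]) with rfl | he
            · omega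
            · exact hy e he
          have hex : e ≤ x := by
            rw [hrow] at hself hsort
            rcases List.mem_cons.1 hself with rfl | h'
            · exact le_rfl
            · exact List.rel_of_pairwise_cons hsort h'
          exact kEquiv_k1 hye (by omega) es

/-! ### Tableaux -/

/-- The row `s` may stand below the row `r` in a column-strict tableau. -/
def RowDominates : List ℕ → List ℕ → Prop
  | _, [] => True
  | [], _ :: _ => False
  | x :: r, y :: s => x < y ∧ RowDominates r s

/-- Semistandard tableaux, where empty rows are allowed at the bottom. -/
def IsTableau : List (List ℕ) → Prop
  | [] => True
  | r :: rs => r.Pairwise (· ≤ ·) ∧ RowDominates r (rs.headD []) ∧ IsTableau rs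

/-- The row reading word of a tableau, from the bottom row to the top row. -/
def readingWord : List (List ℕ) → List ℕ
  | [] => []
  | r :: rs => readingWord rs ++ r

theorem RowDominates.nil_right (r : List ℕ) : RowDominates r [] := by
  cases r <;> trivial

theorem RowDominates.eq_nil {s : List ℕ} (h : RowDominates [] s) : s = [] := by
  cases s with
  | nil => rfl
  | cons => exact h.elim

theorem RowDominates.tail {r s : List ℕ} (h : RowDominates r s) :
    RowDominates r.tail s.tail := by
  cases s with
  | nil => exact RowDominates.nil_right _
  | cons y s =>
    cases r with
    | nil => exact h.elim
    | cons x r => exact h.2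

theorem RowDominates.exists_lt {r s : List ℕ} (h : RowDominates r s) {y : ℕ} (hy : y ∈ s) :
    ∃ x ∈ r, x < y := by
  induction s generalizing r with
  | nil => simp at hy
  | cons z s ih =>
    cases r with
    | nil => exact h.elim
    | cons x r =>
      rcases List.mem_cons.1 hy with rfl | hy
      · exact ⟨x, by simp, h.1⟩
      · obtain ⟨w, hw, hwy⟩ := ih h.2 hy
        exact ⟨w, by simp [hw], hwy⟩

theorem RowDominates.rowInsert {r s : List ℕ} (h : RowDominates r s) (x : ℕ) :
    RowDominates (rowInsert x r).1 s := by
  induction s generalizing r with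
  | nil => exact RowDominates.nil_right _
  | cons z s ih =>
    cases r with
    | nil => exact h.elim
    | cons a r =>
      by_cases hx : x < a
      · rw [rowInsert_cons_of_lt hx]
        exact ⟨hx.trans h.1, h.2⟩
      · rw [rowInsert_cons_of_le (by omega)]
        exact ⟨h.1, ih h.2⟩

theorem RowDominates.rowInsert_bump {r s : List ℕ} (h : RowDominates r s) {x y : ℕ}
    (hy : (Plactic.rowInsert x r).2 = some y) :
    RowDominates (Plactic.rowInsert x r).1 (Plactic.rowInsert y s).1 := by
  induction r generalizing s with
  | nil => simp [Plactic.rowInsert] at hy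
  | cons a r ih =>
    by_cases hx : x < a
    · simp only [rowInsert_cons_of_lt hx, Option.some.injEq] at hy ⊢
      subst hy
      cases s with
      | nil => exact ⟨hx, RowDominates.nil_right _⟩
      | cons b s =>
        rw [rowInsert_cons_of_lt h.1]
        exact ⟨hx, h.2⟩
    · rw [rowInsert_cons_of_le (by omega)] at hy ⊢
      have hxy := lt_of_rowInsert_eq_some hy
      cases s with
      | nil => exact ⟨by omega, RowDominates.nil_right _⟩
      | cons b s =>
        by_cases hyb : y < b
        · rw [rowInsert_cons_of_lt hyb]
          exact ⟨by omega, h.2.rowInsert x⟩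
        · rw [rowInsert_cons_of_le (by omega)]
          exact ⟨h.1, ih h.2 hy⟩

theorem headD_tInsert (x : ℕ) (T : List (List ℕ)) :
    (tInsert x T).headD [] = (rowInsert x (T.headD [])).1 := by
  cases T with
  | nil => rfl
  | cons r rs =>
    rcases h : rowInsert x r with ⟨r', _ | y⟩ <;> simp [tInsert, h]

theorem tail_tInsert_of_none {x : ℕ} {T : List (List ℕ)}
    (h : (rowInsert x (T.headD [])).2 = none) : (tInsert x T).tail = T.tail := by
  cases T with
  | nil => rfl
  | cons r rs =>
    rcases h' : rowInsert x r with ⟨r', _ | y⟩ <;> simp_all [tInsert]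

theorem tail_tInsert_of_some {x y : ℕ} {T : List (List ℕ)}
    (h : (rowInsert x (T.headD [])).2 = some y) : (tInsert x T).tail = tInsert y T.tail := by
  cases T with
  | nil => simp [rowInsert] at h
  | cons r rs =>
    rcases h' : rowInsert x r with ⟨r', _ | y⟩ <;> simp_all [tInsert]

theorem isTableau_iff (T : List (List ℕ)) :
    IsTableau T ↔ T = [] ∨ ((T.headD []).Pairwise (· ≤ ·) ∧
      RowDominates (T.headD []) (T.tail.headD []) ∧ IsTableau T.tail) := by
  cases T <;> simp [IsTableau]

theorem IsTableau.head_sorted {T : List (List ℕ)} (h : IsTableau T) :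
    (T.headD []).Pairwise (· ≤ ·) := by
  cases T with
  | nil => simp
  | cons => exact h.1

theorem IsTableau.tail {T : List (List ℕ)} (h : IsTableau T) : IsTableau T.tail := by
  cases T with
  | nil => trivial
  | cons => exact h.2.2

theorem IsTableau.tInsert {T : List (List ℕ)} (h : IsTableau T) (x : ℕ) :
    IsTableau (tInsert x T) := by
  induction T generalizing x with
  | nil => exact ⟨by simp, RowDominates.nil_right _, trivial⟩
  | cons r rs ih =>
    rw [isTableau_iff]
    right
    rw [headD_tInsert]
    refine ⟨rowInsert_sorted h.1 x, ?_⟩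
    rcases hb : (rowInsert x r).2 with _ | y
    · rw [tail_tInsert_of_none hb]
      exact ⟨h.2.1.rowInsert x, h.2.2⟩
    · rw [tail_tInsert_of_some hb, headD_tInsert]
      exact ⟨h.2.1.rowInsert_bump hb, ih h.2.2 y⟩

theorem IsTableau.foldl {T : List (List ℕ)} (h : IsTableau T) (w : List ℕ) :
    IsTableau (w.foldl (fun t x => Plactic.tInsert x t) T) := by
  induction w generalizing T with
  | nil => exact h
  | cons x w ih => exact ih (h.tInsert x)

theorem isTableau_P (w : List ℕ) : IsTableau (P w) :=
  IsTableau.foldl (T := []) trivial w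

theorem readingWord_eq (T : List (List ℕ)) :
    readingWord T = readingWord T.tail ++ T.headD [] := by
  cases T <;> simp [readingWord]

theorem IsTableau.kEquiv_tInsert {T : List (List ℕ)} (h : IsTableau T) (x : ℕ) :
    KEquiv (readingWord T ++ [x]) (readingWord (Plactic.tInsert x T)) := by
  induction T generalizing x with
  | nil => exact KEquiv.refl _
  | cons r rs ih =>
    rw [readingWord_eq (Plactic.tInsert x (r :: rs)), headD_tInsert]
    have hrow := (kEquiv_rowInsert h.1 x).append_left (readingWord rs)
    rcases hb : (rowInsert x r).2 with _ | y
    · rw [tail_tInsert_of_none hb]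
      simpa [hb, readingWord] using hrow
    · rw [tail_tInsert_of_some hb]
      have := (ih h.2.2 y).append_right (rowInsert x r).1
      simp only [hb, readingWord, List.append_assoc, Option.toList_some, List.headD_cons,
        List.tail_cons] at hrow this ⊢
      exact hrow.trans this

theorem kEquiv_readingWord_P (w : List ℕ) : KEquiv w (readingWord (P w)) := by
  suffices h : ∀ T, IsTableau T → KEquiv (readingWord T ++ w)
      (readingWord (w.foldl (fun t x => tInsert x t) T)) from h [] trivial
  induction w with
  | nil => intro T _; simpa using KEquiv.refl _
  | cons x w ih =>
    intro T hT
    have := (hT.kEquiv_tInsert x).append_right w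
    simp only [List.append_assoc, List.singleton_append] at this
    exact this.trans (ih _ (hT.tInsert x))

/-! ### The insertion tableau is a Knuth invariant -/

/-- Row insertion of a word into a row, with the word of bumped entries. -/
def rowInsertWord : List ℕ → List ℕ → List ℕ × List ℕ
  | r, [] => (r, [])
  | r, x :: xs =>
    ((rowInsertWord (rowInsert x r).1 xs).1,
      (rowInsert x r).2.toList ++ (rowInsertWord (rowInsert x r).1 xs).2)

/-- The Knuth relations between words of length three. -/
inductive KnuthTriple : List ℕ → List ℕ → Prop
  | k1 (a b c : ℕ) : a ≤ b → b < c → KnuthTriple [a, c, b] [c, a, b]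
  | k2 (a b c : ℕ) : a < b → b ≤ c → KnuthTriple [b, a, c] [b, c, a]

theorem foldl_tInsert_cons (w r : List ℕ) (rs : List (List ℕ)) :
    w.foldl (fun t x => tInsert x t) (r :: rs) =
      (rowInsertWord r w).1 :: (rowInsertWord r w).2.foldl (fun t x => tInsert x t) rs := by
  induction w generalizing r rs with
  | nil => rfl
  | cons x w ih =>
    rcases h : rowInsert x r with ⟨r', _ | y⟩ <;> simp [tInsert, rowInsertWord, h, ih]

theorem rowInsertWord_cons_of_le {y : ℕ} {w : List ℕ} (h : ∀ x ∈ w, y ≤ x) (r : List ℕ) :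
    rowInsertWord (y :: r) w = (y :: (rowInsertWord r w).1, (rowInsertWord r w).2) := by
  induction w generalizing r with
  | nil => rfl
  | cons x w ih =>
    simp only [List.mem_cons, forall_eq_or_imp] at h
    simp [rowInsertWord, rowInsert_cons_of_le h.1, ih h.2]

theorem rowInsertWord_k1 {r : List ℕ} (hr : r.Pairwise (· ≤ ·)) {a b c : ℕ} (hab : a ≤ b)
    (hbc : b < c) :
    (rowInsertWord r [a, c, b]).1 = (rowInsertWord r [c, a, b]).1 ∧
      ((rowInsertWord r [a, c, b]).2 = (rowInsertWord r [c, a, b]).2 ∨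
        KnuthTriple (rowInsertWord r [a, c, b]).2 (rowInsertWord r [c, a, b]).2 ∨
        KnuthTriple (rowInsertWord r [c, a, b]).2 (rowInsertWord r [a, c, b]).2) := by
  have hac : a < c := by omega
  induction r with
  | nil => simp [rowInsertWord, rowInsert, hab.not_gt, hbc, hac, hac.not_gt]
  | cons y ys ih =>
    obtain ⟨hy, hys⟩ := List.pairwise_cons.1 hr
    by_cases hay : y ≤ a
    · rw [rowInsertWord_cons_of_le (by simp; omega), rowInsertWord_cons_of_le (by simp; omega)]
      simpa using ih hys
    · simp only [not_le] at hay
      by_cases hcy : c < y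
      · cases ys with
        | nil => simp [rowInsertWord, rowInsert, hay, hcy, hab.not_gt, hbc, hac, hac.not_gt]
        | cons z zs =>
          have hyz : y ≤ z := hy z (by simp)
          have hcz : c < z := by omega
          have hbz : b < z := by omega
          simpa [rowInsertWord, rowInsert_cons_of_lt, rowInsert_cons_of_le, hay, hcy, hab, hbc,
            hac, hac.le, hcz, hbz] using Or.inr (Or.inr (KnuthTriple.k2 c y z hcy hyz))
      · have hyc : y ≤ c := not_lt.1 hcy
        simp only [rowInsertWord, rowInsert_cons_of_lt hay, rowInsert_cons_of_le hac.le,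
          rowInsert_cons_of_le hab, rowInsert_cons_of_le hyc, true_and]
        rcases hz : (rowInsert c ys).2 with _ | z
        · simp
        have hcz := lt_of_rowInsert_eq_some hz
        have hcmem := mem_rowInsert_self c ys
        rcases hb : (rowInsert b (rowInsert c ys).1).2 with _ | b'
        · have := le_of_rowInsert_eq_none hb hcmem
          omega
        have hbc' : b' ≤ c := by
          rcases mem_rowInsert_or (x := b) hcmem with h | h
          · exact le_of_rowInsert_eq_some (rowInsert_sorted hys c) hb h hbc
          · rw [hb, Option.some.injEq] at h
            exact h.le
        have hyb : y ≤ b' := by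
          rcases mem_of_mem_rowInsert (mem_of_rowInsert_eq_some hb) with h | h
          · omega
          · exact hy b' h
        exact Or.inr (Or.inl (KnuthTriple.k1 y b' z hyb (by omega)))

theorem rowInsertWord_k2 {r : List ℕ} (hr : r.Pairwise (· ≤ ·)) {a b c : ℕ} (hab : a < b)
    (hbc : b ≤ c) :
    (rowInsertWord r [b, a, c]).1 = (rowInsertWord r [b, c, a]).1 ∧
      ((rowInsertWord r [b, a, c]).2 = (rowInsertWord r [b, c, a]).2 ∨
        KnuthTriple (rowInsertWord r [b, a, c]).2 (rowInsertWord r [b, c, a]).2) := by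
  have hac : a ≤ c := by omega
  induction r with
  | nil => simp [rowInsertWord, rowInsert, hab, hbc.not_gt, hac.not_gt]
  | cons y ys ih =>
    obtain ⟨hy, hys⟩ := List.pairwise_cons.1 hr
    by_cases hay : y ≤ a
    · rw [rowInsertWord_cons_of_le (by simp; omega), rowInsertWord_cons_of_le (by simp; omega)]
      simpa using ih hys
    · simp only [not_le] at hay
      by_cases hby : b < y
      · simp only [rowInsertWord, rowInsert_cons_of_lt hby, rowInsert_cons_of_lt hab,
          rowInsert_cons_of_le hbc, rowInsert_cons_of_le hac, true_and]
        rcases hz : (rowInsert c ys).2 with _ | z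
        · simp
        · exact Or.inr (KnuthTriple.k2 b y z hby (hy z (mem_of_rowInsert_eq_some hz)))
      · have hyb : y ≤ b := not_lt.1 hby
        simp only [rowInsertWord, rowInsert_cons_of_lt hay, rowInsert_cons_of_le hyb,
          rowInsert_cons_of_le hac, rowInsert_cons_of_le (hyb.trans hbc), true_and]
        rcases hc : (rowInsert c (rowInsert b ys).1).2 with _ | c'
        · simp
        have hcc := lt_of_rowInsert_eq_some hc
        have hcmem := mem_of_rowInsert_eq_some hc
        rcases hb : (rowInsert b ys).2 with _ | b'
        · rcases mem_of_mem_rowInsert hcmem with h | h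
          · omega
          · have := le_of_rowInsert_eq_none hb h
            omega
        have hbb := lt_of_rowInsert_eq_some hb
        have hbc' : b' ≤ c' := le_of_rowInsert_eq_some hys hb hcmem (by omega)
        exact Or.inr (KnuthTriple.k2 y b' c' (by omega) hbc')

theorem KnuthTriple.rowInsertWord {u v : List ℕ} (h : KnuthTriple u v) {r : List ℕ}
    (hr : r.Pairwise (· ≤ ·)) :
    (rowInsertWord r u).1 = (rowInsertWord r v).1 ∧
      ((rowInsertWord r u).2 = (rowInsertWord r v).2 ∨
        KnuthTriple (rowInsertWord r u).2 (rowInsertWord r v).2 ∨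
        KnuthTriple (rowInsertWord r v).2 (rowInsertWord r u).2) := by
  cases h with
  | k1 a b c hab hbc => exact rowInsertWord_k1 hr hab hbc
  | k2 a b c hab hbc =>
    obtain ⟨h, h' | h'⟩ := rowInsertWord_k2 hr hab hbc
    · exact ⟨h, Or.inl h'⟩
    · exact ⟨h, Or.inr (Or.inl h')⟩

theorem KnuthTriple.foldl_tInsert {u v : List ℕ} (h : KnuthTriple u v) {T : List (List ℕ)}
    (hT : IsTableau T) :
    u.foldl (fun t x => tInsert x t) T = v.foldl (fun t x => tInsert x t) T := by
  induction T generalizing u v with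
  | nil =>
    cases h with
    | k1 a b c hab hbc =>
      have hac : a < c := by omega
      simp [tInsert, rowInsert, hab.not_gt, hbc, hac, hac.not_gt]
    | k2 a b c hab hbc =>
      have hac : a ≤ c := by omega
      simp [tInsert, rowInsert, hab, hbc.not_gt, hac.not_gt]
  | cons r rs ih =>
    rw [foldl_tInsert_cons, foldl_tInsert_cons]
    obtain ⟨h, h' | h' | h'⟩ := h.rowInsertWord hT.1
    · rw [h, h']
    · rw [h, ih h' hT.2.2]
    · rw [h, ih h' hT.2.2]

theorem KEquiv.P_eq {u v : List ℕ} (h : KEquiv u v) : P u = P v := by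
  induction h with
  | rel u v h =>
    cases h with
    | k1 x y a b c hab hbc =>
      simp only [P, List.foldl_append]
      exact congrArg (y.foldl (fun t x => tInsert x t))
        ((KnuthTriple.k1 a b c hab hbc).foldl_tInsert (isTableau_P x))
    | k2 x y a b c hab hbc =>
      simp only [P, List.foldl_append]
      exact congrArg (y.foldl (fun t x => tInsert x t))
        ((KnuthTriple.k2 a b c hab hbc).foldl_tInsert (isTableau_P x))
  | refl u => rfl
  | symm u v _ ih => exact ih.symm
  | trans u v w _ _ ih ih' => exact ih.trans ih'

/-! ### Column decomposition of the reading word -/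

theorem IsTableau.map_tail {T : List (List ℕ)} (h : IsTableau T) :
    IsTableau (T.map List.tail) := by
  induction T with
  | nil => trivial
  | cons r rs ih =>
    refine ⟨h.1.tail, ?_, ih h.2.2⟩
    have := h.2.1.tail
    cases rs <;> simpa using this

theorem col_succ (T : List (List ℕ)) (j : ℕ) : col T (j + 1) = col (T.map List.tail) j := by
  simp [col, List.filterMap_map]

theorem col_cons_nil (T : List (List ℕ)) : col ([] :: T) 0 = col T 0 := by
  simp [col]

theorem col_cons_cons (x : ℕ) (r : List ℕ) (T : List (List ℕ)) :
    col ((x :: r) :: T) 0 = x :: col T 0 := by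
  simp [col]

theorem kEquiv_row_column {c : ℕ} {s D : List ℕ} (hs : (c :: s).Pairwise (· ≤ ·))
    (hD : (c :: D).Pairwise (· > ·)) : KEquiv (c :: s ++ D) (c :: D ++ s) := by
  induction D generalizing c with
  | nil => simpa using KEquiv.refl _
  | cons d D ih =>
    obtain ⟨hc, hD'⟩ := List.pairwise_cons.1 hD
    have hdc : d < c := hc d (by simp)
    have hds : (d :: s).Pairwise (· ≤ ·) := by
      refine List.pairwise_cons.2 ⟨fun x hx => ?_, hs.of_cons⟩
      have := List.rel_of_pairwise_cons hs hx
      omega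
    have := (kEquiv_row_smaller hs hdc).append_right D
    simp only [List.cons_append, List.append_assoc, List.nil_append] at this ⊢
    exact this.trans ((ih hds hD').cons c)

theorem IsTableau.kEquiv_column {T : List (List ℕ)} (hT : IsTableau T) {D : List ℕ}
    (hD : D.Pairwise (· > ·)) (hlt : ∀ d ∈ D, ∀ y ∈ T.headD [], d < y) :
    KEquiv (readingWord T ++ D)
      ((col T 0).reverse ++ D ++ readingWord (T.map List.tail)) := by
  induction T generalizing D with
  | nil => simpa [readingWord, col] using KEquiv.refl _
  | cons r rs ih =>
    obtain ⟨hr, hdom, hrs⟩ := hT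
    cases r with
    | nil =>
      have := ih hrs hD (by rw [hdom.eq_nil]; simp)
      simpa [readingWord, col_cons_nil] using this
    | cons c s =>
      have hcD : (c :: D).Pairwise (· > ·) :=
        List.pairwise_cons.2 ⟨fun d hd => hlt d hd c (by simp), hD⟩
      have hrow := (kEquiv_row_column hr hcD).append_left (readingWord rs)
      have hlt' : ∀ d ∈ c :: D, ∀ y ∈ rs.headD [], d < y := by
        intro d hd y hy
        obtain ⟨x, hx, hxy⟩ := hdom.exists_lt hy
        have hcx : c ≤ x := by
          rcases List.mem_cons.1 hx with rfl | hx
          · exact le_rfl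
          · exact List.rel_of_pairwise_cons hr hx
        rcases List.mem_cons.1 hd with rfl | hd
        · omega
        · have := hlt d hd c (by simp)
          omega
      have hrest := (ih hrs hcD hlt').append_right s
      simp only [readingWord, col_cons_cons, List.append_assoc, List.cons_append,
        List.reverse_cons, List.nil_append, List.map_cons, List.tail_cons] at hrow hrest ⊢
      exact hrow.trans hrest

theorem IsTableau.kEquiv_col {T : List (List ℕ)} (hT : IsTableau T) :
    KEquiv (readingWord T) ((col T 0).reverse ++ readingWord (T.map List.tail)) := by
  simpa using hT.kEquiv_column (D := []) (by simp) (by simp)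

theorem IsTableau.lt_of_mem_readingWord {T : List (List ℕ)} (hT : IsTableau T) {c : ℕ}
    (hc : ∀ y ∈ T.headD [], c < y) {y : ℕ} (hy : y ∈ readingWord T) : c < y := by
  induction T with
  | nil => simp [readingWord] at hy
  | cons r rs ih =>
    rcases List.mem_append.1 hy with hy | hy
    · refine ih hT.2.2 (fun z hz => ?_) hy
      obtain ⟨x, hx, hxz⟩ := hT.2.1.exists_lt hz
      exact (hc x hx).trans hxz
    · exact hc y hy

theorem IsTableau.readingWord_eq_nil {T : List (List ℕ)} (hT : IsTableau T)
    (h : T.headD [] = []) : readingWord T = [] :=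
  List.eq_nil_iff_forall_not_mem.2 fun _ hy =>
    lt_irrefl _ (hT.lt_of_mem_readingWord (by rw [h]; simp) hy)

theorem IsTableau.mem_readingWord_of_mem_col {T : List (List ℕ)} (hT : IsTableau T) {y : ℕ}
    (hy : y ∈ col T 0) : y ∈ readingWord T :=
  hT.kEquiv_col.perm.mem_iff.2 (by simp [hy])

theorem IsTableau.mem_readingWord_of_mem_map_tail {T : List (List ℕ)} (hT : IsTableau T) {y : ℕ}
    (hy : y ∈ readingWord (T.map List.tail)) : y ∈ readingWord T :=
  hT.kEquiv_col.perm.mem_iff.2 (by simp [hy])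

theorem IsTableau.col_eq_nil {T : List (List ℕ)} (hT : IsTableau T) (h : T.headD [] = []) :
    col T 0 = [] :=
  List.eq_nil_iff_forall_not_mem.2 fun y hy => by
    simpa [hT.readingWord_eq_nil h] using hT.mem_readingWord_of_mem_col hy

theorem IsTableau.col_sorted {T : List (List ℕ)} (hT : IsTableau T) :
    (col T 0).Pairwise (· < ·) := by
  induction T with
  | nil => simp [col]
  | cons r rs ih =>
    obtain ⟨hr, hdom, hrs⟩ := hT
    cases r with
    | nil => simpa [col_cons_nil] using ih hrs
    | cons c s =>
      rw [col_cons_cons]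
      refine List.pairwise_cons.2 ⟨fun y hy => ?_, ih hrs⟩
      refine hrs.lt_of_mem_readingWord (fun z hz => ?_) (hrs.mem_readingWord_of_mem_col hy)
      obtain ⟨x, hx, hxz⟩ := hdom.exists_lt hz
      rcases List.mem_cons.1 hx with rfl | hx
      · exact hxz
      · exact (List.rel_of_pairwise_cons hr hx).trans_lt hxz

theorem IsTableau.col_cases {T : List (List ℕ)} (hT : IsTableau T) :
    col T 0 = [] ∨ (∃ x ∈ T.headD [], col T 0 = [x]) ∨
      ∃ x ∈ T.headD [], ∃ y ∈ T.tail.headD [], ∃ D, col T 0 = x :: y :: D := by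
  rcases T with _ | ⟨_ | ⟨x, r⟩, T⟩
  · exact Or.inl rfl
  · exact Or.inl (hT.col_eq_nil rfl)
  · rw [col_cons_cons]
    rcases h : T.headD [] with _ | ⟨y, s⟩
    · rw [hT.2.2.col_eq_nil h]
      exact Or.inr (Or.inl ⟨x, by simp, rfl⟩)
    · rcases T with _ | ⟨s', T⟩
      · simp at h
      · obtain rfl : s' = y :: s := h
        rw [col_cons_cons]
        exact Or.inr (Or.inr ⟨x, by simp, y, by simp, _, rfl⟩)

/-! ### Words commuting with `212` -/

theorem append_mem_Cent {u v w : List ℕ} (hv : v ∈ Cent u) (hw : w ∈ Cent u) :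
    v ++ w ∈ Cent u := by
  have h := KEquiv.append_right hv w
  have h' := KEquiv.append_left hw v
  simp only [List.append_assoc] at h h'
  simpa [Cent] using h.trans h'

theorem mem_Cent_of_kEquiv {u v w : List ℕ} (h : KEquiv v w) (hw : w ∈ Cent u) : v ∈ Cent u :=
  ((h.append_left u).trans hw).trans (h.symm.append_right u)

theorem column_mem_Cent {D : List ℕ} (hD : D.Pairwise (· > ·)) (hlt : ∀ d ∈ D, 2 < d) :
    D ++ [2, 1] ∈ Cent [2, 1, 2] := by
  have hD2 : (D ++ [2]).Pairwise (· > ·) :=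
    List.pairwise_append.2 ⟨hD, by simp, by simpa using hlt⟩
  have e₁ : KEquiv (2 :: 1 :: 2 :: (D ++ [2, 1])) (2 :: 1 :: (D ++ [2, 2, 1])) := by
    simpa using (((kEquiv_column_larger hD2 le_rfl).append_right [1]).cons 1).cons 2
  have e₂ : KEquiv (2 :: 1 :: (D ++ [2, 2, 1])) (2 :: (D ++ [1, 2, 2, 1])) := by
    simpa using ((kEquiv_column_larger (x := 1) hD2 (by omega)).append_right [2, 1]).cons 2
  have e₃ : KEquiv [1, 2, 2, 1] [2, 1, 1, 2] :=
    ((kEquiv_k2 (a := 1) (b := 2) (c := 2) (by omega) le_rfl []).symm.cons 1).trans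
      (kEquiv_k1 (a := 1) (b := 1) (c := 2) le_rfl (by omega) [2])
  have e₄ : KEquiv (2 :: (D ++ [2, 1, 1, 2])) (D ++ [2, 2, 1, 1, 2]) := by
    simpa using (kEquiv_column_larger hD2 le_rfl).append_right [1, 1, 2]
  have e₅ : KEquiv [2, 2, 1, 1, 2] [2, 1, 2, 1, 2] :=
    (kEquiv_k2 (a := 1) (b := 2) (c := 2) (by omega) le_rfl [1, 2]).symm
  have h := (((e₁.trans e₂).trans ((e₃.append_left D).cons 2)).trans e₄).trans (e₅.append_left D)
  simpa [Cent] using h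

theorem reverse_mem_Cent {C : List ℕ} (hC : C.Pairwise (· < ·)) (hpos : ∀ x ∈ C, 0 < x)
    (h₁ : C.length = 1 → C = [2]) (h₂ : 2 ≤ C.length → 1 ∈ C ∧ 2 ∈ C) :
    C.reverse ∈ Cent [2, 1, 2] := by
  rcases C with _ | ⟨x, _ | ⟨y, D⟩⟩
  · exact KEquiv.refl _
  · rw [h₁ rfl]
    exact kEquiv_k2 (a := 1) (b := 2) (c := 2) (by omega) le_rfl [2]
  · obtain ⟨hone, htwo⟩ := h₂ (by simp)
    obtain ⟨hx, hyD⟩ := List.pairwise_cons.1 hC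
    obtain ⟨hy, hD⟩ := List.pairwise_cons.1 hyD
    have hx0 := hpos x (by simp)
    have hxy := hx y (by simp)
    obtain rfl : x = 1 := by
      rcases List.mem_cons.1 hone with h | h
      · exact h.symm
      · have := hx 1 h
        omega
    obtain rfl : y = 2 := by
      rcases List.mem_cons.1 (List.mem_of_ne_of_mem (by omega) htwo) with h | h
      · exact h.symm
      · have := hy 2 h
        omega
    simpa using column_mem_Cent (List.pairwise_reverse.2 hD) (by simpa using hy)

theorem IsTableau.readingWord_mem_Cent {T : List (List ℕ)} (hT : IsTableau T)
    (hpos : ∀ x ∈ readingWord T, 0 < x) (h₁ : ∀ j, (col T j).length = 1 → col T j = [2])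
    (h₂ : ∀ j, 2 ≤ (col T j).length → 1 ∈ col T j ∧ 2 ∈ col T j) :
    readingWord T ∈ Cent [2, 1, 2] := by
  induction hn : (T.headD []).length generalizing T with
  | zero =>
    rw [hT.readingWord_eq_nil (List.length_eq_zero_iff.1 hn)]
    exact KEquiv.refl _
  | succ n ih =>
    refine mem_Cent_of_kEquiv hT.kEquiv_col (append_mem_Cent ?_ ?_)
    · exact reverse_mem_Cent hT.col_sorted
        (fun x hx => hpos x (hT.mem_readingWord_of_mem_col hx)) (h₁ 0) (h₂ 0)
    · refine ih hT.map_tail (fun x hx => hpos x (hT.mem_readingWord_of_mem_map_tail hx))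
        (fun j => ?_) (fun j => ?_) ?_
      · simpa [col_succ] using h₁ (j + 1)
      · simpa [col_succ] using h₂ (j + 1)
      · cases T <;> simp_all

/-! ### Unmatched ones -/

/-- The number of letters `1` left unmatched when each `2` is paired, like an opening bracket,
with a later `1`. -/
def unmatchedOnes : List ℕ → ℕ
  | [] => 0
  | x :: w =>
    if x = 1 then unmatchedOnes w + 1 else if x = 2 then unmatchedOnes w - 1 else unmatchedOnes w

theorem unmatchedOnes_append_congr {u v : List ℕ} (h : unmatchedOnes u = unmatchedOnes v)
    (x : List ℕ) : unmatchedOnes (x ++ u) = unmatchedOnes (x ++ v) := by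
  induction x with
  | nil => exact h
  | cons a x ih => simp [unmatchedOnes, ih]

theorem KEquiv.unmatchedOnes_eq {u v : List ℕ} (h : KEquiv u v) :
    unmatchedOnes u = unmatchedOnes v := by
  induction h with
  | rel u v h =>
    cases h with
    | k1 x y a b c hab hbc =>
      simp only [List.append_assoc]
      apply unmatchedOnes_append_congr
      simp only [unmatchedOnes, List.cons_append, List.nil_append]
      split_ifs <;> omega
    | k2 x y a b c hab hbc =>
      simp only [List.append_assoc]
      apply unmatchedOnes_append_congr
      simp only [unmatchedOnes, List.cons_append, List.nil_append]
      split_ifs <;> omega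
  | refl u => rfl
  | symm u v _ ih => exact ih.symm
  | trans u v w _ _ ih ih' => exact ih.trans ih'

theorem unmatchedOnes_eq_zero {w : List ℕ} (h : 1 ∉ w) : unmatchedOnes w = 0 := by
  induction w with
  | nil => rfl
  | cons x w ih =>
    simp only [List.mem_cons, not_or] at h
    simp [unmatchedOnes, ih h.2, Ne.symm h.1]

theorem unmatchedOnes_append_of_two_lt {D : List ℕ} (h : ∀ d ∈ D, 2 < d) (w : List ℕ) :
    unmatchedOnes (D ++ w) = unmatchedOnes w := by
  induction D with
  | nil => rfl
  | cons d D ih =>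
    simp only [List.mem_cons, forall_eq_or_imp] at h
    have h1 : d ≠ 1 := by omega
    have h2 : d ≠ 2 := by omega
    simp [unmatchedOnes, ih h.2, h1, h2]

theorem unmatchedOnes_eq_zero_of_mem_Cent {w : List ℕ} (hw : w ∈ Cent [2, 1, 2]) :
    unmatchedOnes w = 0 := by
  have h := KEquiv.unmatchedOnes_eq hw
  rw [unmatchedOnes_append_congr (v := []) (by simp [unmatchedOnes]) w] at h
  simp only [unmatchedOnes, List.cons_append, List.nil_append, List.append_nil] at h
  simp at h
  omega

theorem IsTableau.first_col_of_unmatchedOnes {T : List (List ℕ)} (hT : IsTableau T)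
    (hpos : ∀ x ∈ readingWord T, 0 < x) (hrow₀ : ∀ x ∈ T.headD [], x ≤ 2)
    (hrow₁ : ∀ x ∈ T.tail.headD [], x ≤ 2) (hone : unmatchedOnes (readingWord T) = 0) :
    unmatchedOnes (readingWord (T.map List.tail)) = 0 ∧
      (col T 0 = [] ∨ col T 0 = [2] ∨ ∃ D, col T 0 = 1 :: 2 :: D) := by
  rw [hT.kEquiv_col.unmatchedOnes_eq] at hone
  have hsort := hT.col_sorted
  rcases hT.col_cases with h | ⟨x, hx, h⟩ | ⟨x, hx, y, hy, D, h⟩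
  · simpa [h] using hone
  · have hx0 := hpos x (hT.mem_readingWord_of_mem_col (by simp [h]))
    have hx2 := hrow₀ x hx
    obtain rfl | rfl : x = 1 ∨ x = 2 := by omega
    · simp [h, unmatchedOnes] at hone
    · refine ⟨unmatchedOnes_eq_zero fun hmem => ?_, Or.inr (Or.inl h)⟩
      have hhead : ∀ y ∈ (T.map List.tail).headD [], 1 < y := by
        rcases T with _ | ⟨_ | ⟨z, r⟩, T⟩
        · simp
        · simp
        · rw [col_cons_cons, List.cons.injEq] at h
          obtain ⟨rfl, -⟩ := h
          intro y hy
          exact List.rel_of_pairwise_cons hT.1 hy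
      exact lt_irrefl _ (hT.map_tail.lt_of_mem_readingWord hhead hmem)
  · have hx0 := hpos x (hT.mem_readingWord_of_mem_col (by simp [h]))
    have hy2 := hrow₁ y hy
    rw [h] at hsort
    obtain ⟨hx', hyD⟩ := List.pairwise_cons.1 hsort
    have hxy := hx' y (by simp)
    obtain rfl : x = 1 := by omega
    obtain rfl : y = 2 := by omega
    refine ⟨?_, Or.inr (Or.inr ⟨D, h⟩)⟩
    have hD : ∀ d ∈ D.reverse, 2 < d := by simpa using (List.pairwise_cons.1 hyD).1
    rw [h] at hone
    simp only [List.reverse_cons, List.append_assoc] at hone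
    rw [unmatchedOnes_append_of_two_lt hD] at hone
    simpa [unmatchedOnes] using hone

theorem IsTableau.col_of_unmatchedOnes {T : List (List ℕ)} (hT : IsTableau T)
    (hpos : ∀ x ∈ readingWord T, 0 < x) (hrow₀ : ∀ x ∈ T.headD [], x ≤ 2)
    (hrow₁ : ∀ x ∈ T.tail.headD [], x ≤ 2) (hone : unmatchedOnes (readingWord T) = 0) (j : ℕ) :
    ((col T j).length = 1 → col T j = [2]) ∧
      (2 ≤ (col T j).length → 1 ∈ col T j ∧ 2 ∈ col T j) := by
  obtain ⟨htail, hcol⟩ := hT.first_col_of_unmatchedOnes hpos hrow₀ hrow₁ hone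
  induction j generalizing T with
  | zero => obtain h | h | ⟨D, h⟩ := hcol <;> simp [h]
  | succ j ih =>
    rw [col_succ]
    have hpos' : ∀ x ∈ readingWord (T.map List.tail), 0 < x :=
      fun x hx => hpos x (hT.mem_readingWord_of_mem_map_tail hx)
    have h₀ : ∀ x ∈ (T.map List.tail).headD [], x ≤ 2 := by
      rcases T with _ | ⟨r, T⟩
      · simp
      · exact fun x hx => hrow₀ x (List.mem_of_mem_tail hx)
    have h₁ : ∀ x ∈ (T.map List.tail).tail.headD [], x ≤ 2 := by
      rcases T with _ | ⟨r, _ | ⟨s, T⟩⟩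
      · simp
      · simp
      · exact fun x hx => hrow₁ x (List.mem_of_mem_tail hx)
    obtain ⟨htail', hcol'⟩ := hT.map_tail.first_col_of_unmatchedOnes hpos' h₀ h₁ htail
    exact ih hT.map_tail hpos' h₀ h₁ htail htail' hcol'

/-! ### Letters in the first two rows -/

theorem mem_first_two_rows_foldl {T : List (List ℕ)} (hT : IsTableau T) {x y : ℕ} {s : List ℕ}
    (hs : (x :: s).Pairwise (· ≤ ·))
    (h : y ∈ T.headD [] ∨ (y ∈ T.tail.headD [] ∧ ∀ z ∈ T.headD [], x < z → y ≤ z)) :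
    y ∈ (s.foldl (fun t x => tInsert x t) T).headD [] ∨
      y ∈ (s.foldl (fun t x => tInsert x t) T).tail.headD [] := by
  induction s generalizing T x with
  | nil => exact h.imp_right And.left
  | cons e s ih =>
    have hxe : x ≤ e := List.rel_of_pairwise_cons hs (by simp)
    refine ih (hT.tInsert e) hs.of_cons ?_
    rw [headD_tInsert]
    rcases h with h | ⟨h, hz⟩
    · refine (mem_rowInsert_or h).imp_right fun hb => ⟨?_, fun z hz hez => ?_⟩
      · rw [tail_tInsert_of_some hb, headD_tInsert]
        exact mem_rowInsert_self _ _
      · exact le_of_rowInsert_eq_some hT.head_sorted hb hz hez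
    · refine Or.inr ⟨?_, fun z hz' hez => ?_⟩
      · rcases hb : (rowInsert e (T.headD [])).2 with _ | b
        · rwa [tail_tInsert_of_none hb]
        · rw [tail_tInsert_of_some hb, headD_tInsert]
          exact mem_rowInsert_of_le h (hz b (mem_of_rowInsert_eq_some hb)
            (hxe.trans_lt (lt_of_rowInsert_eq_some hb)))
      · rcases mem_of_mem_rowInsert hz' with rfl | hz'
        · omega
        · exact hz z hz' (by omega)

/-- A letter followed only by a weakly increasing word ends up in the first two rows. -/
theorem mem_first_two_rows_P (v : List ℕ) (y : ℕ) {s : List ℕ} (hs : s.Pairwise (· ≤ ·)) :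
    y ∈ (P (v ++ y :: s)).headD [] ∨ y ∈ (P (v ++ y :: s)).tail.headD [] := by
  have h : P (v ++ y :: s) = s.foldl (fun t x => tInsert x t) (tInsert y (P v)) := by
    simp [P]
  rw [h]
  refine mem_first_two_rows_foldl (x := 0) ((isTableau_P v).tInsert y)
    (List.pairwise_cons.2 ⟨by simp, hs⟩) (Or.inl ?_)
  rw [headD_tInsert]
  exact mem_rowInsert_self _ _

/-- A weighted count of the letters larger than `2` in the first two rows. -/
def largeWeight (T : List (List ℕ)) : ℕ :=
  2 * (T.headD []).countP (2 < ·) + (T.tail.headD []).countP (2 < ·)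

theorem countP_rowInsert (x : ℕ) (r : List ℕ) :
    (rowInsert x r).2.toList.countP (2 < ·) + (rowInsert x r).1.countP (2 < ·) =
      r.countP (2 < ·) + if 2 < x then 1 else 0 := by
  rw [← List.countP_append, (rowInsert_perm x r).countP_eq, List.countP_cons]
  simp

theorem largeWeight_tInsert_le {x : ℕ} (hx : x ≤ 2) (T : List (List ℕ)) :
    largeWeight (tInsert x T) ≤ largeWeight T := by
  have h := countP_rowInsert x (T.headD [])
  rw [if_neg (by omega)] at h
  unfold largeWeight
  rw [headD_tInsert]
  rcases hb : (rowInsert x (T.headD [])).2 with _ | y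
  · rw [tail_tInsert_of_none hb]
    simp only [hb, Option.toList_none, List.countP_nil] at h
    omega
  · rw [tail_tInsert_of_some hb, headD_tInsert]
    have h' := countP_rowInsert y (T.tail.headD [])
    by_cases hy : 2 < y
    · simp only [hb, Option.toList_some, List.countP_singleton, hy, decide_true, if_true] at h h'
      omega
    · simp only [hb, Option.toList_some, List.countP_singleton, hy, decide_false, if_false,
        Bool.false_eq_true] at h h'
      omega

theorem largeWeight_tInsert_two_lt {T : List (List ℕ)}
    (h0 : (T.headD []).countP (2 < ·) ≠ 0) : largeWeight (tInsert 2 T) < largeWeight T := by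
  have h := countP_rowInsert 2 (T.headD [])
  obtain ⟨z, hz, hz2⟩ := List.countP_pos_iff.1 (Nat.pos_of_ne_zero h0)
  unfold largeWeight
  rw [headD_tInsert]
  rcases hb : (rowInsert 2 (T.headD [])).2 with _ | y
  · have := le_of_rowInsert_eq_none hb hz
    simp at hz2
    omega
  · rw [tail_tInsert_of_some hb, headD_tInsert]
    have h' := countP_rowInsert y (T.tail.headD [])
    have hy : 2 < y := lt_of_rowInsert_eq_some hb
    simp only [hb, Option.toList_some, List.countP_singleton, hy, decide_true, if_true,
      lt_irrefl, if_false] at h h'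
    omega

theorem largeWeight_tInsert_one_lt {T : List (List ℕ)}
    (h0 : (T.headD []).countP (2 < ·) = 0) (h2 : 2 ∈ T.headD [])
    (h1 : (T.tail.headD []).countP (2 < ·) ≠ 0) :
    largeWeight (tInsert 1 T) < largeWeight T := by
  have h := countP_rowInsert 1 (T.headD [])
  obtain ⟨z, hz, hz2⟩ := List.countP_pos_iff.1 (Nat.pos_of_ne_zero h1)
  have hle : ∀ x ∈ T.headD [], x ≤ 2 := by simpa using List.countP_eq_zero.1 h0
  rcases hb : (rowInsert 1 (T.headD [])).2 with _ | y
  · have := le_of_rowInsert_eq_none hb h2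
    omega
  · have hy1 := lt_of_rowInsert_eq_some hb
    have hy2 := hle y (mem_of_rowInsert_eq_some hb)
    obtain rfl : y = 2 := by omega
    unfold largeWeight
    rw [headD_tInsert, tail_tInsert_of_some hb, headD_tInsert]
    have h' := countP_rowInsert 2 (T.tail.headD [])
    rcases hb' : (rowInsert 2 (T.tail.headD [])).2 with _ | y
    · have := le_of_rowInsert_eq_none hb' hz
      simp at hz2
      omega
    · have hy : 2 < y := lt_of_rowInsert_eq_some hb'
      simp only [hb', Option.toList_some, List.countP_singleton, hy, decide_true, if_true,
        lt_irrefl, if_false] at h'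
      rw [if_neg (by omega)] at h
      omega

theorem largeWeight_insert_two_one_two (T : List (List ℕ)) :
    largeWeight (tInsert 2 (tInsert 1 (tInsert 2 T))) ≤ largeWeight T - 1 := by
  have l₁ := largeWeight_tInsert_le (x := 2) le_rfl T
  have l₂ := largeWeight_tInsert_le (x := 1) (by omega) (tInsert 2 T)
  have l₃ := largeWeight_tInsert_le (x := 2) le_rfl (tInsert 1 (tInsert 2 T))
  by_cases h0 : (T.headD []).countP (2 < ·) = 0
  · have h0' : ((tInsert 2 T).headD []).countP (2 < ·) = 0 := by
      have := countP_rowInsert 2 (T.headD [])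
      rw [headD_tInsert]
      simp only [lt_irrefl, if_false] at this
      omega
    by_cases h1 : ((tInsert 2 T).tail.headD []).countP (2 < ·) = 0
    · have : largeWeight (tInsert 2 T) = 0 := by simp only [largeWeight, h0', h1]
      omega
    · have := largeWeight_tInsert_one_lt h0'
        (by rw [headD_tInsert]; exact mem_rowInsert_self _ _) h1
      omega
  · have := largeWeight_tInsert_two_lt h0
    omega

theorem exists_largeWeight_eq_zero {w : List ℕ} (hw : w ∈ Cent [2, 1, 2]) :
    ∃ u, KEquiv (u ++ w) (w ++ u) ∧ largeWeight (P (w ++ u)) = 0 := by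
  suffices h : ∀ n, ∃ u, KEquiv (u ++ w) (w ++ u) ∧
      largeWeight (P (w ++ u)) ≤ largeWeight (P w) - n by
    obtain ⟨u, hu, hle⟩ := h (largeWeight (P w))
    exact ⟨u, hu, by omega⟩
  intro n
  induction n with
  | zero => exact ⟨[], by simpa using KEquiv.refl _, by simp⟩
  | succ n ih =>
    obtain ⟨u, hu, hle⟩ := ih
    refine ⟨u ++ [2, 1, 2], ?_, ?_⟩
    · have h := KEquiv.append_left hw u
      have h' := hu.append_right [2, 1, 2]
      simp only [List.append_assoc] at h h' ⊢
      exact h.trans h'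
    · have h : P (w ++ (u ++ [2, 1, 2])) = tInsert 2 (tInsert 1 (tInsert 2 (P (w ++ u)))) := by
        simp [P]
      have := largeWeight_insert_two_one_two (P (w ++ u))
      rw [h]
      omega

/-- If a representative of an element of the centralizer of `212` ends in a letter followed by a
weakly increasing word, then that letter is at most `2`. -/
theorem le_two_of_mem_Cent {w v s : List ℕ} {y : ℕ} (hw : w ∈ Cent [2, 1, 2])
    (h : KEquiv w (v ++ y :: s)) (hs : s.Pairwise (· ≤ ·)) : y ≤ 2 := by
  obtain ⟨u, hu, hzero⟩ := exists_largeWeight_eq_zero hw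
  have hP := (hu.symm.trans (h.append_left u)).P_eq
  rw [← List.append_assoc] at hP
  have hmem := mem_first_two_rows_P (u ++ v) y hs
  rw [← hP] at hmem
  have hrow₀ : ((P (w ++ u)).headD []).countP (2 < ·) = 0 := by
    unfold largeWeight at hzero; omega
  have hrow₁ : ((P (w ++ u)).tail.headD []).countP (2 < ·) = 0 := by
    unfold largeWeight at hzero; omega
  rcases hmem with hmem | hmem
  · simpa using List.countP_eq_zero.1 hrow₀ y hmem
  · simpa using List.countP_eq_zero.1 hrow₁ y hmem

theorem first_row_le_two {w : List ℕ} (hw : w ∈ Cent [2, 1, 2]) {y : ℕ}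
    (hy : y ∈ (P w).headD []) : y ≤ 2 := by
  obtain ⟨l, s, hls⟩ := List.append_of_mem hy
  have hsort := (isTableau_P w).head_sorted
  have h := kEquiv_readingWord_P w
  rw [readingWord_eq, hls, ← List.append_assoc] at h
  rw [hls] at hsort
  exact le_two_of_mem_Cent hw h (List.pairwise_append.1 hsort).2.1.of_cons

theorem second_row_le_two {w : List ℕ} (hw : w ∈ Cent [2, 1, 2]) {y : ℕ}
    (hy : y ∈ (P w).tail.headD []) : y ≤ 2 := by
  have hsort := (isTableau_P w).tail.head_sorted
  have h := kEquiv_readingWord_P w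
  rw [readingWord_eq, readingWord_eq (P w).tail] at h
  rcases List.eq_nil_or_concat ((P w).tail.headD []) with hnil | ⟨l, z, hlz⟩
  · simp only [hnil, List.not_mem_nil] at hy
  · rw [List.concat_eq_append] at hlz
    rw [hlz] at h hsort hy
    have hz : z ≤ 2 := by
      refine le_two_of_mem_Cent hw (v := readingWord (P w).tail.tail ++ l)
        (s := (P w).headD []) ?_ (isTableau_P w).head_sorted
      simpa using h
    rcases List.mem_append.1 hy with hy | hy
    · exact ((List.pairwise_append.1 hsort).2.2 y hy z (by simp)).trans hz
    · rwa [List.mem_singleton.1 hy]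

end Plactic

open Plactic in
theorem stmt_10 (w : List ℕ) (hw : ∀ x ∈ w, 0 < x) :
    w ∈ Cent [2, 1, 2] ↔
      (∀ j, (col (P w) j).length = 1 → col (P w) j = [2]) ∧
      (∀ j, 2 ≤ (col (P w) j).length → 1 ∈ col (P w) j ∧ 2 ∈ col (P w) j) := by
  have hT := isTableau_P w
  have hread := kEquiv_readingWord_P w
  have hpos : ∀ x ∈ readingWord (P w), 0 < x := fun x hx => hw x (hread.perm.mem_iff.2 hx)
  constructor
  · intro h
    have hone : unmatchedOnes (readingWord (P w)) = 0 := by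
      rw [← hread.unmatchedOnes_eq]
      exact unmatchedOnes_eq_zero_of_mem_Cent h
    have hcol := hT.col_of_unmatchedOnes hpos (fun _ => first_row_le_two h)
      (fun _ => second_row_le_two h) hone
    exact ⟨fun j => (hcol j).1, fun j => (hcol j).2⟩
  · rintro ⟨h₁, h₂⟩
    exact mem_Cent_of_kEquiv hread (hT.readingWord_mem_Cent hpos h₁ h₂)
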